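/- arXiv:1605.01302 — 2 statements merged into one kernel-verified Lean document; each statement's English description precedes it below -/
import Mathlib

section
/- Let α ∈ (0,1), λ ∈ [0,1), and set b₀ = b₋(α,λ). Then s₁(b₀) = s₂(b₀) = S(α,λ), and for every b ∈ (0,1]: if b ≤ b₀ then s₁(b) ≥ S(α,λ), while if b₀ ≤ b then s₂(b) ≥ S(α,λ). In other words, the piecewise function equal to s₁ on (0,b₀] and to s₂ on (b₀,1] attains its minimum value S(α,λ) at b = b₀. -/
noncomputable def S (a lam : ℝ) : ℝ :=
  (1 - a * lam) * ((2 - a * lam - a) + (lam - 1) * Real.sqrt (4 * a - 3 * a ^ 2)) /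
    (2 * (1 - a) * (a * lam - a * lam ^ 2 - a + 1))

noncomputable def bPlus (a lam : ℝ) : ℝ :=
  ((2 - a * lam - a) + (1 - lam) * Real.sqrt (4 * a - 3 * a ^ 2)) /
    (2 * (-(a * lam ^ 2) + a * lam - a + 1))

noncomputable def bMinus (a lam : ℝ) : ℝ :=
  ((2 - a * lam - a) - (1 - lam) * Real.sqrt (4 * a - 3 * a ^ 2)) /
    (2 * (-(a * lam ^ 2) + a * lam - a + 1))

noncomputable def s1 (a lam b : ℝ) : ℝ :=
  ((a * lam ^ 2 - a * lam) * b ^ 2 + b - 1) / ((a * lam - a + 1) * b - 1)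

noncomputable def s2 (a lam b : ℝ) : ℝ :=
  ((1 - a) * b ^ 2 + (a * lam + a - 1) * b - a) / ((a * lam - a + 1) * b - 1)

noncomputable def f (a lam : ℝ) : ℝ :=
  2 * (1 - a) * (a * lam - a * lam ^ 2 - a + 1) /
    ((1 - a * lam) * ((2 - a * lam - a) + (lam - 1) * Real.sqrt (4 * a - 3 * a ^ 2)))

/-!
On `[0, 1]` the function `s1` decreases and `s2` increases: up to positive factors the chord
slopes of `s1` and `s2` between `x` and `y` are `lam * w - 1` and `(2 - c) - w`, where
`c = a * lam - a + 1` and `w = x + y - c * x * y` satisfies `0 ≤ w ≤ 2 - c`, while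
`lam * (2 - c) = 1 - (1 - lam) * (1 - a * lam)`. Hence the piecewise minimum sits where the two
graphs cross, which is at a root of the quadratic `gapPoly`. The root `bMinus` lies
in `[0, 1]`, as its rationalized form
`2 * (1 - a) / ((2 - a * lam - a) + (1 - lam) * √(4 * a - 3 * a ^ 2))` makes visible.
-/

/-- The numerator of `s2 - s1` over the common denominator `(a * lam - a + 1) * b - 1`; its roots
are the crossing points of the two branches. -/
noncomputable def gapPoly (a lam b : ℝ) : ℝ :=
  (-(a * lam ^ 2) + a * lam - a + 1) * b ^ 2 - (2 - a * lam - a) * b + (1 - a)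

section Crossing

variable {a lam b : ℝ}

theorem leadingCoeff_gapPoly_pos (ha0 : 0 ≤ a) (ha1 : a < 1) (hl0 : 0 ≤ lam)
    (hl1 : lam ≤ 1) : 0 < -(a * lam ^ 2) + a * lam - a + 1 := by
  linarith [mul_nonneg (mul_nonneg ha0 hl0) (sub_nonneg.2 hl1)]

theorem s2_sub_s1 (a lam b : ℝ) :
    s2 a lam b - s1 a lam b = gapPoly a lam b / ((a * lam - a + 1) * b - 1) := by
  rw [s1, s2, gapPoly, ← sub_div]
  ring

theorem s1_eq_of_gapPoly_eq_zero (ha : a ≠ 1) (hb : (a * lam - a + 1) * b ≠ 1)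
    (hgap : gapPoly a lam b = 0) : s1 a lam b = (1 - a * lam) / (1 - a) * b := by
  rw [s1, div_mul_eq_mul_div, div_eq_div_iff (sub_ne_zero.2 hb) (sub_ne_zero.2 ha.symm)]
  rw [gapPoly] at hgap
  linear_combination -hgap

theorem S_eq_mul_bMinus (a lam : ℝ) : S a lam = (1 - a * lam) / (1 - a) * bMinus a lam := by
  rw [S, bMinus, div_mul_div_comm]
  congr 1 <;> ring

theorem discrim_gapPoly (ha : 0 ≤ 4 * a - 3 * a ^ 2) :
    discrim (-(a * lam ^ 2) + a * lam - a + 1) (-(2 - a * lam - a)) (1 - a) =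
      ((1 - lam) * √(4 * a - 3 * a ^ 2)) * ((1 - lam) * √(4 * a - 3 * a ^ 2)) := by
  rw [discrim]
  linear_combination -(1 - lam) ^ 2 * Real.mul_self_sqrt ha

theorem gapPoly_bMinus (ha : 0 ≤ 4 * a - 3 * a ^ 2)
    (hD : -(a * lam ^ 2) + a * lam - a + 1 ≠ 0) : gapPoly a lam (bMinus a lam) = 0 := by
  have hroot := (quadratic_eq_zero_iff hD (discrim_gapPoly ha) (bMinus a lam)).2
    (Or.inr (by rw [bMinus, neg_neg]))
  rw [gapPoly]
  linear_combination hroot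

theorem bMinus_eq_rationalized (ha : 0 ≤ 4 * a - 3 * a ^ 2)
    (hD : -(a * lam ^ 2) + a * lam - a + 1 ≠ 0)
    (hsum : (2 - a * lam - a) + (1 - lam) * √(4 * a - 3 * a ^ 2) ≠ 0) :
    bMinus a lam = 2 * (1 - a) / ((2 - a * lam - a) + (1 - lam) * √(4 * a - 3 * a ^ 2)) := by
  rw [bMinus, div_eq_div_iff (mul_ne_zero two_ne_zero hD) hsum]
  have hdiscrim := discrim_gapPoly (lam := lam) ha
  rw [discrim] at hdiscrim
  linear_combination hdiscrim

theorem four_mul_sub_three_mul_sq_nonneg (ha0 : 0 ≤ a) (ha1 : a ≤ 1) :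
    0 ≤ 4 * a - 3 * a ^ 2 := by
  nlinarith

theorem bMinus_mem_Icc (ha0 : 0 ≤ a) (ha1 : a < 1) (hl1 : lam ≤ 1)
    (hD : -(a * lam ^ 2) + a * lam - a + 1 ≠ 0) : bMinus a lam ∈ Set.Icc (0 : ℝ) 1 := by
  have hsqrt : 0 ≤ (1 - lam) * √(4 * a - 3 * a ^ 2) :=
    mul_nonneg (sub_nonneg.2 hl1) (Real.sqrt_nonneg _)
  have hle : 2 * (1 - a) ≤ (2 - a * lam - a) + (1 - lam) * √(4 * a - 3 * a ^ 2) := by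
    linarith [mul_le_of_le_one_right ha0 hl1]
  have hpos : 0 < 2 * (1 - a) := by linarith
  have hsum := hpos.trans_le hle
  rw [bMinus_eq_rationalized (four_mul_sub_three_mul_sq_nonneg ha0 ha1.le) hD hsum.ne']
  exact ⟨div_nonneg hpos.le hsum.le, div_le_one_of_le₀ hle hsum.le⟩

end Crossing

section Monotonicity

variable {a lam c x y : ℝ}

theorem add_sub_mul_mul_nonneg (hx : 0 ≤ x) (hy : 0 ≤ y) (hcx : c * x ≤ 1) :
    0 ≤ x + y - c * x * y := by
  linarith [mul_nonneg hy (sub_nonneg.2 hcx)]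

theorem add_sub_mul_mul_le (hc : c ≤ 1) (hx : x ≤ 1) (hy : y ≤ 1) (hcx : c * x ≤ 1) :
    x + y - c * x * y ≤ 2 - c := by
  linarith [mul_nonneg (sub_nonneg.2 hy) (sub_nonneg.2 hcx),
    mul_nonneg (sub_nonneg.2 hc) (sub_nonneg.2 hx)]

theorem denom_coeff_lt_one (ha : 0 < a) (hl : lam < 1) : a * lam - a + 1 < 1 := by
  linarith [mul_lt_of_lt_one_right ha hl]

theorem mul_lt_one_of_mem_Icc (hc : c < 1) (hx : x ∈ Set.Icc (0 : ℝ) 1) : c * x < 1 := by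
  rcases hx.1.eq_or_lt with rfl | hx0
  · simp
  · exact (mul_lt_of_lt_one_left hx0 hc).trans_le hx.2

theorem s1_sub_s1 (hx : (a * lam - a + 1) * x ≠ 1) (hy : (a * lam - a + 1) * y ≠ 1) :
    s1 a lam x - s1 a lam y =
      a * (1 - lam) * (y - x) * (1 - lam * (x + y - (a * lam - a + 1) * x * y)) /
        ((1 - (a * lam - a + 1) * x) * (1 - (a * lam - a + 1) * y)) := by
  rw [s1, s1, div_sub_div _ _ (sub_ne_zero.2 hx) (sub_ne_zero.2 hy)]
  congr 1 <;> ring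

theorem s2_sub_s2 (hx : (a * lam - a + 1) * x ≠ 1) (hy : (a * lam - a + 1) * y ≠ 1) :
    s2 a lam y - s2 a lam x =
      (1 - a) * (y - x) *
          (2 - (a * lam - a + 1) - (x + y - (a * lam - a + 1) * x * y)) /
        ((1 - (a * lam - a + 1) * x) * (1 - (a * lam - a + 1) * y)) := by
  rw [s2, s2, div_sub_div _ _ (sub_ne_zero.2 hy) (sub_ne_zero.2 hx)]
  congr 1 <;> ring

theorem lam_mul_le_one {w : ℝ} (ha1 : a ≤ 1) (hl1 : lam ≤ 1) (hw0 : 0 ≤ w)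
    (hw : w ≤ 2 - (a * lam - a + 1)) : lam * w ≤ 1 := by
  rcases le_total lam 0 with hl0 | hl0
  · exact (mul_nonpos_of_nonpos_of_nonneg hl0 hw0).trans zero_le_one
  · have ha_lam : a * lam ≤ 1 := mul_le_one₀ ha1 hl0 hl1
    calc lam * w ≤ lam * (2 - (a * lam - a + 1)) := mul_le_mul_of_nonneg_left hw hl0
      _ = 1 - (1 - lam) * (1 - a * lam) := by ring
      _ ≤ 1 := sub_le_self _ (mul_nonneg (sub_nonneg.2 hl1) (sub_nonneg.2 ha_lam))

theorem s1_antitoneOn (ha0 : 0 < a) (ha1 : a ≤ 1) (hl1 : lam < 1) :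
    AntitoneOn (s1 a lam) (Set.Icc 0 1) := by
  intro x hx y hy hxy
  have hc := denom_coeff_lt_one ha0 hl1
  have hcx := mul_lt_one_of_mem_Icc hc hx
  have hcy := mul_lt_one_of_mem_Icc hc hy
  have hchord := lam_mul_le_one ha1 hl1.le
    (add_sub_mul_mul_nonneg hx.1 hy.1 hcx.le) (add_sub_mul_mul_le hc.le hx.2 hy.2 hcx.le)
  rw [← sub_nonneg, s1_sub_s1 hcx.ne hcy.ne]
  refine div_nonneg (mul_nonneg (mul_nonneg (mul_nonneg ha0.le ?_) ?_) ?_) (mul_nonneg ?_ ?_) <;>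
    linarith

theorem s2_monotoneOn (ha0 : 0 < a) (ha1 : a ≤ 1) (hl1 : lam < 1) :
    MonotoneOn (s2 a lam) (Set.Icc 0 1) := by
  intro x hx y hy hxy
  have hc := denom_coeff_lt_one ha0 hl1
  have hcx := mul_lt_one_of_mem_Icc hc hx
  have hcy := mul_lt_one_of_mem_Icc hc hy
  have hchord := add_sub_mul_mul_le hc.le hx.2 hy.2 hcx.le
  rw [← sub_nonneg, s2_sub_s2 hcx.ne hcy.ne]
  refine div_nonneg (mul_nonneg (mul_nonneg ?_ ?_) ?_) (mul_nonneg ?_ ?_) <;> linarith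

end Monotonicity

theorem stmt_8_general (a lam : ℝ) (ha0 : 0 < a) (ha1 : a < 1) (hl1 : lam < 1)
    (hD : -(a * lam ^ 2) + a * lam - a + 1 ≠ 0) :
    s1 a lam (bMinus a lam) = S a lam ∧ s2 a lam (bMinus a lam) = S a lam ∧
    ∀ b ∈ Set.Icc (0 : ℝ) 1,
      (b ≤ bMinus a lam → s1 a lam b ≥ S a lam) ∧
      (bMinus a lam ≤ b → s2 a lam b ≥ S a lam) := by
  have hmem := bMinus_mem_Icc ha0.le ha1 hl1.le hD
  have hgap := gapPoly_bMinus (four_mul_sub_three_mul_sq_nonneg ha0.le ha1.le) hD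
  have hs1 : s1 a lam (bMinus a lam) = S a lam := by
    rw [S_eq_mul_bMinus]
    exact s1_eq_of_gapPoly_eq_zero ha1.ne
      (mul_lt_one_of_mem_Icc (denom_coeff_lt_one ha0 hl1) hmem).ne hgap
  have hs2 : s2 a lam (bMinus a lam) = S a lam := by
    rw [← hs1, ← sub_eq_zero, s2_sub_s1, hgap, zero_div]
  refine ⟨hs1, hs2, fun b hb => ⟨fun hle => ?_, fun hle => ?_⟩⟩
  · exact hs1 ▸ s1_antitoneOn ha0 ha1.le hl1 hb hmem hle
  · exact hs2 ▸ s2_monotoneOn ha0 ha1.le hl1 hmem hb hle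

theorem stmt_8 (a lam : ℝ) (ha0 : 0 < a) (ha1 : a < 1)
    (hl0 : 0 ≤ lam) (hl1 : lam < 1) :
    s1 a lam (bMinus a lam) = S a lam ∧ s2 a lam (bMinus a lam) = S a lam ∧
    ∀ b ∈ Set.Ioc (0 : ℝ) 1,
      (b ≤ bMinus a lam → s1 a lam b ≥ S a lam) ∧
      (bMinus a lam ≤ b → s2 a lam b ≥ S a lam) := by
  have hD := (leadingCoeff_gapPoly_pos ha0.le ha1 hl0 hl1.le).ne'
  obtain ⟨hs1, hs2, hmin⟩ := stmt_8_general a lam ha0 ha1 hl1 hD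
  exact ⟨hs1, hs2, fun b hb => hmin b (Set.Ioc_subset_Icc_self hb)⟩
end

section
/- For all α ∈ (0,1) and λ ∈ [0,1), the speedup factor satisfies f(α,λ) ≤ 4/3; moreover f(1/3, 0) = 4/3, so the maximum value 4/3 of the speedup factor function is attained at α = 1/3, λ = 0. -/
/-!
Write `s = √(4 * a - 3 * a ^ 2)`. The bracket in the denominator of `f` and its conjugate (with `s`
replaced by `-s`) multiply to twice the numerator, so rationalising turns `f a lam` into the
conjugate divided by `2 * (1 - a * lam)`. Both brackets are affine in `lam`, hence determined by
their values at `0` and at `1 / a`; since `a ≤ s < 2 - a`, this makes the denominator positive and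
exhibits `f a lam` as `f a 0 = (2 - a + s) / 2` minus a nonnegative term. Finally `a + 2 / 3` is the
tangent line of the concave function `s` at `a = 1 / 3`, so `s ≤ a + 2 / 3`.
-/

section SpeedupFactor

variable {a lam : ℝ}

lemma le_sqrt_four_mul_sub (ha : 0 ≤ a) (ha1 : a ≤ 1) : a ≤ √(4 * a - 3 * a ^ 2) := by
  refine Real.le_sqrt_of_sq_le ?_
  linarith [mul_nonneg ha (sub_nonneg.mpr ha1)]

lemma sqrt_four_mul_sub_lt_two_sub (ha1 : a < 1) : √(4 * a - 3 * a ^ 2) < 2 - a := by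
  rw [Real.sqrt_lt' (by linarith)]
  linarith [pow_pos (sub_pos.mpr ha1) 2]

lemma sqrt_four_mul_sub_le_add_two_thirds (ha : 0 ≤ a) : √(4 * a - 3 * a ^ 2) ≤ a + 2 / 3 := by
  refine Real.sqrt_le_iff.mpr ⟨by linarith, ?_⟩
  linarith [sq_nonneg (2 * a - 2 / 3)]

lemma f_denominator_factor_pos (ha : 0 ≤ a) (ha1 : a < 1) (hlam : 0 ≤ lam) (halam : a * lam < 1) :
    0 < (2 - a * lam - a) + (lam - 1) * √(4 * a - 3 * a ^ 2) := by
  set s := √(4 * a - 3 * a ^ 2)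
  have value_at_zero_pos : 0 < 2 - a - s := sub_pos.mpr (sqrt_four_mul_sub_lt_two_sub ha1)
  have scaled_value_at_inv_nonneg : 0 ≤ (1 - a) * (a + s) :=
    mul_nonneg (sub_nonneg.mpr ha1.le) (add_nonneg ha (Real.sqrt_nonneg _))
  -- Interpolate between `lam = 0` and `lam = 1 / a`, scaling the latter value by `a`.
  calc
    0 < (1 - a * lam) * (2 - a - s) + lam * ((1 - a) * (a + s)) :=
      add_pos_of_pos_of_nonneg (mul_pos (sub_pos.mpr halam) value_at_zero_pos)
        (mul_nonneg hlam scaled_value_at_inv_nonneg)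
    _ = (2 - a * lam - a) + (lam - 1) * s := by ring

lemma f_denominator_factor_mul_conjugate (ha : 0 ≤ a) (ha1 : a ≤ 1) :
    ((2 - a * lam - a) + (lam - 1) * √(4 * a - 3 * a ^ 2)) *
        ((2 - a * lam - a) + (1 - lam) * √(4 * a - 3 * a ^ 2)) =
      2 * (2 * (1 - a) * (a * lam - a * lam ^ 2 - a + 1)) := by
  have radicand_nonneg : 0 ≤ 4 * a - 3 * a ^ 2 := by
    linarith [mul_nonneg ha (sub_nonneg.mpr ha1)]
  linear_combination (-(1 - lam) ^ 2) * Real.sq_sqrt radicand_nonneg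

lemma f_eq_conjugate_div (ha : 0 ≤ a) (ha1 : a < 1) (hlam : 0 ≤ lam) (halam : a * lam < 1) :
    f a lam =
      ((2 - a * lam - a) + (1 - lam) * √(4 * a - 3 * a ^ 2)) / (2 * (1 - a * lam)) := by
  have denominator_pos := f_denominator_factor_pos ha ha1 hlam halam
  have one_sub_pos : 0 < 1 - a * lam := sub_pos.mpr halam
  rw [f, div_eq_div_iff (mul_pos one_sub_pos denominator_pos).ne' (by positivity)]
  linear_combination
    -(1 - a * lam) * f_denominator_factor_mul_conjugate (lam := lam) ha ha1.le

lemma f_zero_right (ha : 0 ≤ a) (ha1 : a < 1) :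
    f a 0 = (2 - a + √(4 * a - 3 * a ^ 2)) / 2 := by
  simpa using f_eq_conjugate_div ha ha1 le_rfl (by simp)

lemma f_eq_f_zero_sub (ha : 0 ≤ a) (ha1 : a < 1) (hlam : 0 ≤ lam) (halam : a * lam < 1) :
    f a lam =
      f a 0 - lam * ((1 - a) * (√(4 * a - 3 * a ^ 2) - a)) / (2 * (1 - a * lam)) := by
  have one_sub_ne_zero : 1 - a * lam ≠ 0 := (sub_pos.mpr halam).ne'
  rw [f_eq_conjugate_div ha ha1 hlam halam, f_zero_right ha ha1]
  field_simp
  ring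

lemma f_le_f_zero (ha : 0 ≤ a) (ha1 : a < 1) (hlam : 0 ≤ lam) (halam : a * lam < 1) :
    f a lam ≤ f a 0 := by
  have drop_nonneg : 0 ≤ (1 - a) * (√(4 * a - 3 * a ^ 2) - a) :=
    mul_nonneg (sub_nonneg.mpr ha1.le) (sub_nonneg.mpr (le_sqrt_four_mul_sub ha ha1.le))
  rw [f_eq_f_zero_sub ha ha1 hlam halam]
  exact sub_le_self _ (div_nonneg (mul_nonneg hlam drop_nonneg) (by linarith))

lemma f_zero_le_four_thirds (ha : 0 ≤ a) (ha1 : a < 1) : f a 0 ≤ 4 / 3 := by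
  rw [f_zero_right ha ha1]
  linarith [sqrt_four_mul_sub_le_add_two_thirds ha]

lemma f_one_third_zero : f (1 / 3) 0 = 4 / 3 := by
  have radicand_eq_one : (4 * (1 / 3) - 3 * (1 / 3) ^ 2 : ℝ) = 1 := by norm_num
  rw [f_zero_right (by norm_num) (by norm_num), radicand_eq_one, Real.sqrt_one]
  norm_num

end SpeedupFactor

theorem stmt_9_general :
    (∀ a lam : ℝ, 0 ≤ a → a < 1 → 0 ≤ lam → a * lam < 1 → f a lam ≤ 4 / 3) ∧
    f (1 / 3) 0 = 4 / 3 :=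
  ⟨fun _ _ ha ha1 hlam halam =>
    (f_le_f_zero ha ha1 hlam halam).trans (f_zero_le_four_thirds ha ha1), f_one_third_zero⟩

theorem stmt_9 :
    (∀ a lam : ℝ, 0 < a → a < 1 → 0 ≤ lam → lam < 1 → f a lam ≤ 4 / 3) ∧
    f (1 / 3) 0 = 4 / 3 :=
  ⟨fun a lam ha ha1 hlam hlam1 => stmt_9_general.1 a lam ha.le ha1 hlam
    (mul_lt_one_of_nonneg_of_lt_one_left ha.le ha1 hlam1.le), stmt_9_general.2⟩
end
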